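/- arXiv:2111.09721 — 2 statements merged into one kernel-verified Lean document; each statement's English description precedes it below -/
import Mathlib

section
/- Assume Conditions 10 and 12 hold. Then there is a constant C_R < ∞ such that for every n ∈ ℕ, sup_{θ∈Θ} ρ₁(R_{n,θ}) ≤ C_R, where ρ₁ denotes the largest singular value. -/
open MeasureTheory ProbabilityTheory Set Matrix

noncomputable section

/-- `ℝ^p` with the Euclidean norm. -/
abbrev Euc (p : ℕ) := EuclideanSpace ℝ (Fin p)

/-- Build a Euclidean vector from a plain function. -/
def toEuc {p : ℕ} (v : Fin p → ℝ) : Euc p := (WithLp.equiv 2 (Fin p → ℝ)).symm v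

/-- The standard Gaussian distribution on `ℝ^p`. -/
def stdGaussian (p : ℕ) : Measure (Euc p) :=
  (Measure.pi fun _ : Fin p => gaussianReal 0 1).map (toEuc (p := p))

/-- The `L¹` Wasserstein distance between two distributions on `ℝ^p`
(dual formulation: supremum over `1`-Lipschitz test functions). -/
def W1 {p : ℕ} (P Q : Measure (Euc p)) : ℝ :=
  sSup { r | ∃ f : Euc p → ℝ, LipschitzWith 1 f ∧
    r = |(∫ x, f x ∂P) - (∫ x, f x ∂Q)| }

/-- Partial derivative in the `i`-th coordinate direction. -/
def pder {p : ℕ} (i : Fin p) (f : Euc p → ℝ) (θ : Euc p) : ℝ :=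
  fderiv ℝ f θ (EuclideanSpace.single i 1)

/-- The gradient as a Euclidean vector. -/
def gradVec {p : ℕ} (f : Euc p → ℝ) (θ : Euc p) : Euc p := toEuc fun i => pder i f θ

/-- The correlation matrix `R_{n,θ}` with entries `k_θ(x_i − x_j)`. -/
def Rmat {d p : ℕ} (x : ℕ → Euc d) (kern : Euc p → Euc d → ℝ) (n : ℕ) (θ : Euc p) :
    Matrix (Fin n) (Fin n) ℝ :=
  Matrix.of fun i j => kern θ (x i - x j)

/-- `diag(M)`: set the off-diagonal entries of `M` to zero. -/
def diagPart {n : ℕ} (A : Matrix (Fin n) (Fin n) ℝ) : Matrix (Fin n) (Fin n) ℝ :=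
  Matrix.diagonal A.diag

/-- The leave-one-out cross-validation criterion
`M_n(θ) = (1/n) yᵀ R_{n,θ}⁻¹ diag(R_{n,θ}⁻¹)⁻² R_{n,θ}⁻¹ y`. -/
def CVcrit {d p : ℕ} (x : ℕ → Euc d) (kern : Euc p → Euc d → ℝ) (n : ℕ)
    (y : Fin n → ℝ) (θ : Euc p) : ℝ :=
  (1 / n) *
    (y ⬝ᵥ ((Rmat x kern n θ)⁻¹ * ((diagPart ((Rmat x kern n θ)⁻¹))⁻¹) ^ 2 *
      (Rmat x kern n θ)⁻¹).mulVec y)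

/-- `opBound A C` means that the largest singular value of `A` is at most `C`. -/
def opBound {n : ℕ} (A : Matrix (Fin n) (Fin n) ℝ) (C : ℝ) : Prop :=
  ∀ v : Fin n → ℝ,
    Real.sqrt (∑ i, A.mulVec v i ^ 2) ≤ C * Real.sqrt (∑ i, v i ^ 2)

/-!
Balls of radius `δ / 2` centred at `δ`-separated points are disjoint, and by Peetre's inequality
`(1 + ‖·‖) ^ (-r)` varies on such a ball by at most a constant factor. Hence summing it over
separated points costs no more than a multiple of its integral, finite when `r` exceeds the
dimension. Absolute row and column sums of a matrix decaying off the diagonal like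
`‖x i - x j‖ ^ (-r)` are therefore bounded independently of its size, and Schur's test turns this
into a bound on the `ℓ²` operator norm.
-/

theorem sum_mul_measureReal_le_integral {α ι : Type*} [MeasurableSpace α] {μ : Measure α}
    {g : α → ℝ} (hg : Integrable g μ) (hg_nonneg : 0 ≤ g) {s : Finset ι} {A : ι → Set α}
    {a : ι → ℝ} (hA : ∀ i ∈ s, MeasurableSet (A i)) (hA_finite : ∀ i ∈ s, μ (A i) ≠ ⊤)
    (hA_disj : (s : Set ι).PairwiseDisjoint A) (hag : ∀ i ∈ s, ∀ y ∈ A i, a i ≤ g y) :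
    ∑ i ∈ s, a i * μ.real (A i) ≤ ∫ y, g y ∂μ :=
  calc ∑ i ∈ s, a i * μ.real (A i) ≤ ∑ i ∈ s, ∫ y in A i, g y ∂μ :=
        Finset.sum_le_sum fun i hi =>
          setIntegral_ge_of_const_le_real (hA i hi) (hA_finite i hi) (hag i hi) hg.integrableOn
    _ = ∫ y in ⋃ i ∈ s, A i, g y ∂μ :=
        (integral_biUnion_finset s hA hA_disj fun _ _ => hg.integrableOn).symm
    _ ≤ ∫ y, g y ∂μ := setIntegral_le_integral hg (Filter.Eventually.of_forall hg_nonneg)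

theorem one_add_rpow_le_two_rpow_mul {t r : ℝ} (ht : 0 ≤ t) (hr : 0 ≤ r) :
    (1 + t) ^ r ≤ 2 ^ r * (1 + t ^ r) :=
  calc (1 + t) ^ r ≤ (2 * max 1 t) ^ r := by
        gcongr
        linarith [le_max_left 1 t, le_max_right 1 t]
    _ = 2 ^ r * max 1 (t ^ r) := by
        rw [Real.mul_rpow zero_le_two (by positivity),
          (Real.monotoneOn_rpow_Ici_of_exponent_nonneg hr).map_max (by simp) ht, Real.one_rpow]
    _ ≤ 2 ^ r * (1 + t ^ r) := by
        gcongr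
        exact max_le_add_of_nonneg zero_le_one (by positivity)

theorem one_add_norm_rpow_neg_le_mul {E : Type*} [SeminormedAddCommGroup E] {r : ℝ} (hr : 0 ≤ r)
    (y z : E) :
    (1 + ‖z‖) ^ (-r) ≤ (1 + ‖y - z‖) ^ r * (1 + ‖y‖) ^ (-r) := by
  have h_base : 1 + ‖y‖ ≤ (1 + ‖y - z‖) * (1 + ‖z‖) := by
    linarith [norm_le_norm_sub_add y z, mul_nonneg (norm_nonneg (y - z)) (norm_nonneg z)]
  have h_pow : (1 + ‖y‖) ^ r ≤ (1 + ‖y - z‖) ^ r * (1 + ‖z‖) ^ r := by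
    rw [← Real.mul_rpow (by positivity) (by positivity)]
    gcongr
  rw [Real.rpow_neg (by positivity), Real.rpow_neg (by positivity), ← div_eq_mul_inv,
    inv_le_iff_one_le_mul₀ (by positivity), div_mul_eq_mul_div, one_le_div (by positivity)]
  exact h_pow

section Separated

variable {E : Type*} [NormedAddCommGroup E] [NormedSpace ℝ E] [FiniteDimensional ℝ E]

theorem sum_one_add_norm_sub_rpow_neg_mul_le_integral [MeasurableSpace E] [BorelSpace E]
    (μ : Measure E) [μ.IsAddHaarMeasure] {r δ : ℝ} (hr : Module.finrank ℝ E < r) (hδ : 0 ≤ δ)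
    {ι : Type*} {x : ι → E} (hx : Pairwise fun i j => δ ≤ ‖x i - x j‖) (s : Finset ι) (z : E) :
    (∑ j ∈ s, (1 + ‖z - x j‖) ^ (-r)) * μ.real (Metric.ball 0 (δ / 2)) ≤
      (1 + δ / 2) ^ r * ∫ y, (1 + ‖y‖) ^ (-r) ∂μ := by
  have hr_nonneg : 0 ≤ r := (Nat.cast_nonneg _).trans hr.le
  have h_disj : Pairwise fun i j =>
      Disjoint (Metric.ball (z - x i) (δ / 2)) (Metric.ball (z - x j) (δ / 2)) := by
    intro i j hij
    refine Metric.ball_disjoint_ball ?_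
    rw [add_halves, dist_sub_left, dist_eq_norm]
    exact hx hij
  have h_ball : ∀ j, ∀ y ∈ Metric.ball (z - x j) (δ / 2),
      (1 + ‖z - x j‖) ^ (-r) ≤ (1 + δ / 2) ^ r * (1 + ‖y‖) ^ (-r) := by
    intro j y hy
    refine (one_add_norm_rpow_neg_le_mul hr_nonneg y (z - x j)).trans ?_
    gcongr
    exact (mem_ball_iff_norm.mp hy).le
  have h_packing := sum_mul_measureReal_le_integral (s := s)
    ((integrable_one_add_norm (μ := μ) hr).const_mul ((1 + δ / 2) ^ r))
    (fun y => by positivity) (fun j _ => measurableSet_ball)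
    (fun j _ => measure_ball_lt_top.ne) (h_disj.set_pairwise _) (fun j _ => h_ball j)
  simpa only [Measure.addHaar_real_ball_center, ← Finset.sum_mul, integral_const_mul]
    using h_packing

theorem exists_sum_one_div_one_add_norm_sub_rpow_le {r δ : ℝ} (hr : Module.finrank ℝ E < r)
    (hδ : 0 < δ) :
    ∃ S : ℝ, 0 ≤ S ∧ ∀ {ι : Type*} {x : ι → E}, (Pairwise fun i j => δ ≤ ‖x i - x j‖) →
      ∀ (s : Finset ι) (z : E), ∑ j ∈ s, 1 / (1 + ‖z - x j‖ ^ r) ≤ S := by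
  borelize E
  have hr_nonneg : 0 ≤ r := (Nat.cast_nonneg _).trans hr.le
  let μ : Measure E := Measure.addHaar
  let V := μ.real (Metric.ball 0 (δ / 2))
  let I := ∫ y, (1 + ‖y‖) ^ (-r) ∂μ
  have hV : 0 < V := ENNReal.toReal_pos (Metric.measure_ball_pos μ 0 (half_pos hδ)).ne'
    measure_ball_lt_top.ne
  have : 0 ≤ I := integral_nonneg fun y => by positivity
  refine ⟨2 ^ r * ((1 + δ / 2) ^ r * I / V), by positivity, fun {ι x} hx s z => ?_⟩
  have h_term : ∀ j, 1 / (1 + ‖z - x j‖ ^ r) ≤ 2 ^ r * (1 + ‖z - x j‖) ^ (-r) := by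
    intro j
    rw [Real.rpow_neg (by positivity), ← div_eq_mul_inv, div_le_div_iff₀ (by positivity)
      (by positivity), one_mul]
    exact one_add_rpow_le_two_rpow_mul (norm_nonneg _) hr_nonneg
  calc ∑ j ∈ s, 1 / (1 + ‖z - x j‖ ^ r) ≤ 2 ^ r * ∑ j ∈ s, (1 + ‖z - x j‖) ^ (-r) := by
        rw [Finset.mul_sum]
        exact Finset.sum_le_sum fun j _ => h_term j
    _ ≤ 2 ^ r * ((1 + δ / 2) ^ r * I / V) := by
        gcongr
        exact (le_div_iff₀ hV).mpr (sum_one_add_norm_sub_rpow_neg_mul_le_integral μ hr hδ.le hx s z)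

end Separated

section OperatorNorm

open scoped Matrix.Norms.L2Operator

section SchurTest

variable {𝕜 m n : Type*} [RCLike 𝕜] [Fintype n]

theorem norm_mulVec_apply_sq_le (A : Matrix m n 𝕜) (v : n → 𝕜) (i : m) :
    ‖(A *ᵥ v) i‖ ^ 2 ≤ (∑ j, ‖A i j‖) * ∑ j, ‖A i j‖ * ‖v j‖ ^ 2 :=
  calc ‖(A *ᵥ v) i‖ ^ 2 ≤ (∑ j, ‖A i j‖ * ‖v j‖) ^ 2 := by
        gcongr
        exact norm_sum_le_of_le _ fun j _ => norm_mul_le (A i j) (v j)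
    _ ≤ (∑ j, ‖A i j‖) * ∑ j, ‖A i j‖ * ‖v j‖ ^ 2 :=
        Finset.sum_sq_le_sum_mul_sum_of_sq_le_mul _ (fun j _ => norm_nonneg _)
          (fun j _ => by positivity) fun j _ => by rw [mul_pow, sq ‖A i j‖, mul_assoc]

variable [Fintype m] [DecidableEq n]

theorem l2_opNorm_le_sqrt_mul_of_sum_le {A : Matrix m n 𝕜} {R C : ℝ} (hR_nonneg : 0 ≤ R)
    (hR : ∀ i, ∑ j, ‖A i j‖ ≤ R) (hC : ∀ j, ∑ i, ‖A i j‖ ≤ C) : ‖A‖ ≤ √(R * C) := by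
  rw [Matrix.l2_opNorm_def]
  refine ContinuousLinearMap.opNorm_le_bound _ (Real.sqrt_nonneg _) fun v => ?_
  rw [EuclideanSpace.norm_eq, EuclideanSpace.norm_eq, ← Real.sqrt_mul' _ (by positivity)]
  refine Real.sqrt_le_sqrt ?_
  calc ∑ i, ‖(A *ᵥ v) i‖ ^ 2 ≤ ∑ i, R * ∑ j, ‖A i j‖ * ‖v j‖ ^ 2 := by
        gcongr with i
        exact (norm_mulVec_apply_sq_le A v i).trans (by gcongr; exact hR i)
    _ = R * ∑ j, (∑ i, ‖A i j‖) * ‖v j‖ ^ 2 := by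
        rw [← Finset.mul_sum, Finset.sum_comm]
        simp only [Finset.sum_mul]
    _ ≤ R * ∑ j, C * ‖v j‖ ^ 2 := by
        gcongr with j
        exact hC j
    _ = R * C * ∑ j, ‖v j‖ ^ 2 := by rw [← Finset.mul_sum, mul_assoc]

end SchurTest

theorem opBound_of_l2_opNorm_le {N : ℕ} {A : Matrix (Fin N) (Fin N) ℝ} {C : ℝ} (hA : ‖A‖ ≤ C) :
    opBound A C := by
  intro v
  have h_norm : ‖WithLp.toLp 2 (A *ᵥ v)‖ ≤ C * ‖WithLp.toLp 2 v‖ :=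
    (Matrix.l2_opNorm_mulVec A (WithLp.toLp 2 v)).trans (by gcongr)
  simpa only [EuclideanSpace.norm_eq, Real.norm_eq_abs, sq_abs] using h_norm

theorem Rmat_singular_value_bound_general {E : Type*} [NormedAddCommGroup E] [NormedSpace ℝ E]
    [FiniteDimensional ℝ E] {𝕜 : Type*} [RCLike 𝕜] {r δ : ℝ} (hr : Module.finrank ℝ E < r)
    (hδ : 0 < δ) (C : ℝ) :
    ∃ K : ℝ, ∀ {m n : Type*} [Fintype m] [Fintype n] [DecidableEq n] {x : m → E} {y : n → E},
      (Pairwise fun i j => δ ≤ ‖x i - x j‖) → (Pairwise fun i j => δ ≤ ‖y i - y j‖) →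
      ∀ A : Matrix m n 𝕜, (∀ i j, ‖A i j‖ ≤ C / (1 + ‖x i - y j‖ ^ r)) → ‖A‖ ≤ K := by
  -- Two constants: `m` and `n` may live in different universes.
  obtain ⟨S, hS, h_row⟩ := exists_sum_one_div_one_add_norm_sub_rpow_le hr hδ
  obtain ⟨T, -, h_col⟩ := exists_sum_one_div_one_add_norm_sub_rpow_le hr hδ
  refine ⟨√(|C| * S * (|C| * T)), fun {m n} _ _ _ {x y} hx hy A hA => ?_⟩
  have h_entry : ∀ i j, ‖A i j‖ ≤ |C| * (1 / (1 + ‖x i - y j‖ ^ r)) := by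
    intro i j
    rw [mul_one_div]
    exact (hA i j).trans (by gcongr; exact le_abs_self C)
  refine l2_opNorm_le_sqrt_mul_of_sum_le (by positivity) (fun i => ?_) (fun j => ?_)
  · refine (Finset.sum_le_sum fun j _ => h_entry i j).trans ?_
    rw [← Finset.mul_sum]
    gcongr
    exact h_row hy _ (x i)
  · refine (Finset.sum_le_sum fun i _ => h_entry i j).trans ?_
    simp only [norm_sub_rev _ (y j), ← Finset.mul_sum]
    gcongr
    exact h_col hx _ (y j)

end OperatorNorm

/-- Lemma C.1: under Conditions 10 and 12, the largest singular value of
`R_{n,θ}` is bounded uniformly in `n` and `θ ∈ Θ`. -/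
theorem Rmat_singular_value_bound
    {d p : ℕ} (Θ : Set (Euc p)) (hΘcompact : IsCompact Θ)
    (x : ℕ → Euc d) (kern : Euc p → Euc d → ℝ)
    -- Condition 10 (minimal distance between observation points)
    (cx : ℝ) (hcx : 0 < cx) (hmindist : ∀ i j : ℕ, i ≠ j → cx ≤ ‖x i - x j‖)
    -- Condition 12 (third-order smoothness in θ and decay of the correlation)
    (hsmooth : ∀ z : Euc d, ∀ θ ∈ interior Θ, ContDiffAt ℝ 3 (fun θ' => kern θ' z) θ)
    (CR2 cR2 : ℝ) (hCR2 : 0 < CR2) (hcR2 : 0 < cR2)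
    (hdecay : ∀ θ ∈ Θ, ∀ z : Euc d,
      |kern θ z| ≤ CR2 / (1 + ‖z‖ ^ ((d : ℝ) + cR2)))
    (hdecay1 : ∀ θ ∈ interior Θ, ∀ (z : Euc d) (j : Fin p),
      |pder j (fun θ' => kern θ' z) θ| ≤ CR2 / (1 + ‖z‖ ^ ((d : ℝ) + cR2)))
    (hdecay2 : ∀ θ ∈ interior Θ, ∀ (z : Euc d) (j k : Fin p),
      |pder k (pder j fun θ' => kern θ' z) θ| ≤ CR2 / (1 + ‖z‖ ^ ((d : ℝ) + cR2)))
    (hdecay3 : ∀ θ ∈ interior Θ, ∀ (z : Euc d) (j k l : Fin p),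
      |pder l (pder k (pder j fun θ' => kern θ' z)) θ|
        ≤ CR2 / (1 + ‖z‖ ^ ((d : ℝ) + cR2)))
    : ∃ CR : ℝ, ∀ (n : ℕ), ∀ θ ∈ Θ, opBound (Rmat x kern n θ) CR := by
  obtain ⟨K, hK⟩ := Rmat_singular_value_bound_general (E := Euc d) (𝕜 := ℝ) (r := d + cR2)
    (by simpa using hcR2) hcx CR2
  have hx (n : ℕ) : Pairwise fun i j : Fin n => cx ≤ ‖x i - x j‖ :=
    fun i j hij => hmindist i j (Fin.val_ne_of_ne hij)
  exact ⟨K, fun n θ hθ => opBound_of_l2_opNorm_le (hK (hx n) (hx n) _ fun i j => hdecay θ hθ _)⟩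
end
end

section
/- Assume Conditions 10, 11 and 12 hold. Then there is a constant C < ∞ such that for every n ∈ ℕ: sup_{θ∈int Θ} ‖∇M_n(θ)‖ ≤ C (1/n) ‖y^{(n)}‖², sup_{θ∈int Θ} ρ₁(∇²M_n(θ)) ≤ C (1/n) ‖y^{(n)}‖², and sup_{θ∈int Θ} max_{j,k,ℓ=1,…,p} |∂³M_n(θ)/∂θ_j∂θ_k∂θ_ℓ| ≤ C (1/n) ‖y^{(n)}‖², where ρ₁ denotes the largest singular value. -/
open MeasureTheory ProbabilityTheory Set Matrix

noncomputable section

/-! Schur's test and a packing bound for `∑ j, 1 / (1 + ‖a - x j‖ ^ s)`, `s > d`, bound the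
correlation matrix `R` and its `θ`-derivatives in operator norm uniformly in `n`. Coercivity passes
from `R` to `R⁻¹` and from there to the diagonal of `R⁻¹`, so the two inverses in `M_n` are bounded
as well. Functions with bounded partial derivatives are closed under products, inverses and linear
maps, with constants that do not see the dimension of the matrices, and `M_n` is the image of such a
matrix function under a linear functional of norm at most `‖y‖² / n`. -/

open WithLp (toLp)
open scoped Matrix.Norms.L2Operator

section DirectionalDerivatives

variable {κ E A B : Type*} [NormedAddCommGroup E] [NormedSpace ℝ E]

/-- All iterated derivatives of `f` of order at most `m` along the directions `e i` exist on `U`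
and are bounded there in norm by `K`. Stating the bounds for a single function with an explicit `K`
makes a bound over a family of functions, possibly valued in different spaces, uniform as soon as
`K` does not depend on the member. -/
def DirDerivsBoundedOn [NormedAddCommGroup A] [NormedSpace ℝ A] (e : κ → E) (U : Set E) (K : ℝ) :
    ℕ → (E → A) → Prop
  | 0, f => ∀ θ ∈ U, ‖f θ‖ ≤ K
  | m + 1, f => (∀ θ ∈ U, ‖f θ‖ ≤ K) ∧ (∀ θ ∈ U, DifferentiableAt ℝ f θ) ∧
      ∀ i, DirDerivsBoundedOn e U K m fun θ => fderiv ℝ f θ (e i)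

/-- The recursive bound for the derivatives of order at most `m` of a pointwise inverse `F⁻¹`,
where `K` bounds those of `F` and `c` bounds `F⁻¹`. The recursion comes from
`∂F⁻¹ = -F⁻¹ (∂F) F⁻¹`, each product costing a factor `2 ^ m`. -/
def inverseDerivBound (K c : ℝ) : ℕ → ℝ
  | 0 => c
  | m + 1 => max (inverseDerivBound K c m) (4 ^ m * K * inverseDerivBound K c m ^ 2)

namespace DirDerivsBoundedOn

variable {e : κ → E} {U : Set E} {K L : ℝ} {m : ℕ}

section NormedSpace

variable [NormedAddCommGroup A] [NormedSpace ℝ A] [NormedAddCommGroup B] [NormedSpace ℝ B]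
  {f g : E → A}

theorem norm_le (hf : DirDerivsBoundedOn e U K m f) {θ : E} (hθ : θ ∈ U) : ‖f θ‖ ≤ K := by
  cases m with
  | zero => exact hf θ hθ
  | succ m => exact hf.1 θ hθ

theorem nonneg (hf : DirDerivsBoundedOn e U K m f) {θ : E} (hθ : θ ∈ U) : 0 ≤ K :=
  (norm_nonneg _).trans (hf.norm_le hθ)

theorem differentiableAt (hf : DirDerivsBoundedOn e U K (m + 1) f) {θ : E} (hθ : θ ∈ U) :
    DifferentiableAt ℝ f θ :=
  hf.2.1 θ hθ

theorem dirDeriv (hf : DirDerivsBoundedOn e U K (m + 1) f) (i : κ) :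
    DirDerivsBoundedOn e U K m fun θ => fderiv ℝ f θ (e i) :=
  hf.2.2 i

theorem of_succ (hf : DirDerivsBoundedOn e U K (m + 1) f) : DirDerivsBoundedOn e U K m f := by
  induction m generalizing f with
  | zero => exact hf.1
  | succ m ih => exact ⟨hf.1, hf.2.1, fun i => ih (hf.dirDeriv i)⟩

theorem mono (hf : DirDerivsBoundedOn e U K m f) (hKL : K ≤ L) : DirDerivsBoundedOn e U L m f := by
  induction m generalizing f with
  | zero => exact fun θ hθ => (hf θ hθ).trans hKL
  | succ m ih =>
    exact ⟨fun θ hθ => (hf.1 θ hθ).trans hKL, hf.2.1, fun i => ih (hf.dirDeriv i)⟩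

theorem congr (hU : IsOpen U) (hf : DirDerivsBoundedOn e U K m f) (hfg : EqOn g f U) :
    DirDerivsBoundedOn e U K m g := by
  induction m generalizing f g with
  | zero => exact fun θ hθ => (congrArg norm (hfg hθ)).trans_le (hf θ hθ)
  | succ m ih =>
    have hev : ∀ θ ∈ U, g =ᶠ[nhds θ] f := fun θ hθ => hfg.eventuallyEq_of_mem (hU.mem_nhds hθ)
    refine ⟨fun θ hθ => (congrArg norm (hfg hθ)).trans_le (hf.norm_le hθ),
      fun θ hθ => (hev θ hθ).differentiableAt_iff.2 (hf.differentiableAt hθ),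
      fun i => ih (hf.dirDeriv i) fun θ hθ => ?_⟩
    simp only [(hev θ hθ).fderiv_eq]

theorem add (hU : IsOpen U) (hf : DirDerivsBoundedOn e U K m f)
    (hg : DirDerivsBoundedOn e U L m g) :
    DirDerivsBoundedOn e U (K + L) m fun θ => f θ + g θ := by
  have hbound : ∀ θ ∈ U, ‖f θ + g θ‖ ≤ K + L := fun θ hθ =>
    norm_add_le_of_le (hf.norm_le hθ) (hg.norm_le hθ)
  induction m generalizing f g with
  | zero => exact hbound
  | succ m ih =>
    refine ⟨hbound, fun θ hθ => (hf.differentiableAt hθ).add (hg.differentiableAt hθ),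
      fun i => (ih (hf.dirDeriv i) (hg.dirDeriv i) fun θ hθ => norm_add_le_of_le
        ((hf.dirDeriv i).norm_le hθ) ((hg.dirDeriv i).norm_le hθ)).congr hU fun θ hθ => ?_⟩
    simp only [fderiv_fun_add (hf.differentiableAt hθ) (hg.differentiableAt hθ),
      _root_.add_apply]

theorem clm_comp (hU : IsOpen U) (hf : DirDerivsBoundedOn e U K m f) (T : A →L[ℝ] B)
    (hT : ‖T‖ ≤ L) : DirDerivsBoundedOn e U (L * K) m fun θ => T (f θ) := by
  induction m generalizing f with
  | zero => exact fun θ hθ => T.le_of_opNorm_le_of_le hT (hf.norm_le hθ)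
  | succ m ih =>
    refine ⟨fun θ hθ => T.le_of_opNorm_le_of_le hT (hf.norm_le hθ),
      fun θ hθ => T.differentiableAt.comp θ (hf.differentiableAt hθ),
      fun i => (ih (hf.dirDeriv i)).congr hU fun θ hθ => ?_⟩
    exact DFunLike.congr_fun
      (T.hasFDerivAt.comp θ (hf.differentiableAt hθ).hasFDerivAt).fderiv (e i)

theorem linearMap_comp (hU : IsOpen U) (hf : DirDerivsBoundedOn e U K m f) (T : A →ₗ[ℝ] B)
    (hL : 0 ≤ L) (hT : ∀ a, ‖T a‖ ≤ L * ‖a‖) :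
    DirDerivsBoundedOn e U (L * K) m fun θ => T (f θ) :=
  hf.clm_comp hU (T.mkContinuous L hT) (T.mkContinuous_norm_le hL hT)

theorem neg (hU : IsOpen U) (hf : DirDerivsBoundedOn e U K m f) :
    DirDerivsBoundedOn e U K m fun θ => -f θ := by
  simpa using hf.linearMap_comp hU (-LinearMap.id) zero_le_one (fun a => by simp)

end NormedSpace

section NormedAlgebra

variable [NormedRing A] [NormedAlgebra ℝ A] {f g : E → A}

theorem mul (hU : IsOpen U) (hf : DirDerivsBoundedOn e U K m f)
    (hg : DirDerivsBoundedOn e U L m g) :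
    DirDerivsBoundedOn e U (2 ^ m * (K * L)) m fun θ => f θ * g θ := by
  induction m generalizing f g with
  | zero =>
    intro θ hθ
    simpa using norm_mul_le_of_le (hf.norm_le hθ) (hg.norm_le hθ)
  | succ m ih =>
    have hbound : ∀ θ ∈ U, ‖f θ * g θ‖ ≤ 2 ^ (m + 1) * (K * L) := fun θ hθ =>
      (norm_mul_le_of_le (hf.norm_le hθ) (hg.norm_le hθ)).trans <|
        le_mul_of_one_le_left (mul_nonneg (hf.nonneg hθ) (hg.nonneg hθ)) (one_le_pow₀ one_le_two)
    have hLeibniz (i : κ) : DirDerivsBoundedOn e U (2 ^ (m + 1) * (K * L)) m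
        fun θ => f θ * fderiv ℝ g θ (e i) + fderiv ℝ f θ (e i) * g θ :=
      ((ih hf.of_succ (hg.dirDeriv i)).add hU (ih (hf.dirDeriv i) hg.of_succ)).mono
        (by rw [pow_succ]; linarith)
    refine ⟨hbound, fun θ hθ => (hf.differentiableAt hθ).mul (hg.differentiableAt hθ),
      fun i => (hLeibniz i).congr hU fun θ hθ => ?_⟩
    simp [fderiv_fun_mul' (hf.differentiableAt hθ) (hg.differentiableAt hθ)]

theorem ringInverse [CompleteSpace A] (hU : IsOpen U) {c : ℝ} (hf : DirDerivsBoundedOn e U K m f)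
    (hunit : ∀ θ ∈ U, IsUnit (f θ)) (hc : ∀ θ ∈ U, ‖Ring.inverse (f θ)‖ ≤ c) :
    DirDerivsBoundedOn e U (inverseDerivBound K c m) m fun θ => Ring.inverse (f θ) := by
  induction m with
  | zero => exact hc
  | succ m ih =>
    have hinv := ih hf.of_succ
    have hderiv : ∀ θ ∈ U, HasFDerivAt (fun t => Ring.inverse (f t))
        ((-ContinuousLinearMap.mulLeftRight ℝ A (Ring.inverse (f θ)) (Ring.inverse (f θ))).comp
          (fderiv ℝ f θ)) θ := by
      intro θ hθ
      obtain ⟨u, hu⟩ := hunit θ hθ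
      have h := hasFDerivAt_ringInverse (𝕜 := ℝ) u
      rw [← Ring.inverse_unit, hu] at h
      exact h.comp θ (hf.differentiableAt hθ).hasFDerivAt
    refine ⟨fun θ hθ => (hinv.norm_le hθ).trans (le_max_left _ _),
      fun θ hθ => (hderiv θ hθ).differentiableAt, fun i => ?_⟩
    refine ((((hinv.mul hU (hf.dirDeriv i)).mul hU hinv).neg hU).mono ?_).congr hU fun θ hθ => ?_
    · refine (le_of_eq ?_).trans (le_max_right _ _)
      rw [show (4 : ℝ) = 2 * 2 by norm_num, mul_pow]
      ring
    · simp [(hderiv θ hθ).fderiv]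

end NormedAlgebra

end DirDerivsBoundedOn

end DirectionalDerivatives

section EuclideanMatrix

variable {ι κ : Type*} [Fintype ι] [Fintype κ]

theorem abs_dotProduct_le_norm_mul_norm (v w : ι → ℝ) : |v ⬝ᵥ w| ≤ ‖toLp 2 v‖ * ‖toLp 2 w‖ := by
  simpa [EuclideanSpace.inner_toLp_toLp, dotProduct_comm w v] using
    abs_real_inner_le_norm (toLp 2 v) (toLp 2 w)

theorem norm_toLp_mulVec_le [DecidableEq κ] (M : Matrix ι κ ℝ) (v : κ → ℝ) :
    ‖toLp 2 (M *ᵥ v)‖ ≤ ‖M‖ * ‖toLp 2 v‖ :=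
  M.l2_opNorm_mulVec (toLp 2 v)

theorem l2_opNorm_le_of_forall_norm_mulVec_le [DecidableEq κ] (M : Matrix ι κ ℝ) {C : ℝ}
    (hC : 0 ≤ C) (h : ∀ v, ‖toLp 2 (M *ᵥ v)‖ ≤ C * ‖toLp 2 v‖) : ‖M‖ ≤ C :=
  ContinuousLinearMap.opNorm_le_bound _ hC fun v => h v.ofLp

/-- Schur's test. -/
theorem l2_opNorm_le_sqrt_mul_of_sum_abs_le [DecidableEq κ] (M : Matrix ι κ ℝ) {r c : ℝ}
    (hr₀ : 0 ≤ r) (hr : ∀ i, ∑ j, |M i j| ≤ r) (hc : ∀ j, ∑ i, |M i j| ≤ c) :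
    ‖M‖ ≤ √(r * c) := by
  refine l2_opNorm_le_of_forall_norm_mulVec_le M (Real.sqrt_nonneg _) fun v => ?_
  have hrow : ∀ i, (M *ᵥ v) i ^ 2 ≤ r * ∑ j, |M i j| * v j ^ 2 := fun i =>
    (Finset.sum_sq_le_sum_mul_sum_of_sq_le_mul Finset.univ (fun j _ => abs_nonneg (M i j))
      (fun j _ => by positivity)
      (fun j _ => le_of_eq (by rw [mul_pow, ← sq_abs (M i j)]; ring))).trans
    (mul_le_mul_of_nonneg_right (hr i) (Finset.sum_nonneg fun j _ => by positivity))
  have hsq : ‖toLp 2 (M *ᵥ v)‖ ^ 2 ≤ ‖toLp 2 v‖ ^ 2 * (r * c) := by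
    simp only [EuclideanSpace.real_norm_sq_eq]
    calc ∑ i, (M *ᵥ v) i ^ 2
        ≤ ∑ i, r * ∑ j, |M i j| * v j ^ 2 := Finset.sum_le_sum fun i _ => hrow i
      _ = r * ∑ j, (∑ i, |M i j|) * v j ^ 2 := by
        simp only [← Finset.mul_sum, Finset.sum_mul]
        rw [Finset.sum_comm]
      _ ≤ r * ∑ j, c * v j ^ 2 := by gcongr with j; exact hc j
      _ = (∑ j, v j ^ 2) * (r * c) := by rw [← Finset.mul_sum]; ring
  calc ‖toLp 2 (M *ᵥ v)‖ ≤ √(‖toLp 2 v‖ ^ 2 * (r * c)) := Real.le_sqrt_of_sq_le hsq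
    _ = √(r * c) * ‖toLp 2 v‖ := by
      rw [Real.sqrt_mul (sq_nonneg _), Real.sqrt_sq (norm_nonneg _), mul_comm]

theorem l2_opNorm_le_of_sum_abs_le [DecidableEq κ] (M : Matrix ι κ ℝ) {C : ℝ} (hC : 0 ≤ C)
    (hrow : ∀ i, ∑ j, |M i j| ≤ C) (hcol : ∀ j, ∑ i, |M i j| ≤ C) : ‖M‖ ≤ C :=
  (l2_opNorm_le_sqrt_mul_of_sum_abs_le M hC hrow hcol).trans_eq (Real.sqrt_mul_self hC)

theorem abs_dotProduct_mulVec_le [DecidableEq ι] (M : Matrix ι ι ℝ) (v : ι → ℝ) :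
    |v ⬝ᵥ M *ᵥ v| ≤ ‖M‖ * ‖toLp 2 v‖ ^ 2 :=
  calc |v ⬝ᵥ M *ᵥ v| ≤ ‖toLp 2 v‖ * (‖M‖ * ‖toLp 2 v‖) :=
        (abs_dotProduct_le_norm_mul_norm _ _).trans (by gcongr; exact norm_toLp_mulVec_le M v)
    _ = ‖M‖ * ‖toLp 2 v‖ ^ 2 := by ring

theorem l2_opNorm_diagonal_diag_le [DecidableEq ι] (M : Matrix ι ι ℝ) :
    ‖diagonal M.diag‖ ≤ ‖M‖ := by
  rw [l2_opNorm_diagonal, pi_norm_le_iff_of_nonneg (norm_nonneg M)]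
  exact fun i => by simpa using abs_dotProduct_mulVec_le M (Pi.single i 1)

/-- The quadratic form of `M`, which need not be symmetric, is at least `c` times the squared
Euclidean norm. -/
def CoerciveWith (c : ℝ) (M : Matrix ι ι ℝ) : Prop :=
  ∀ v : ι → ℝ, c * ‖toLp 2 v‖ ^ 2 ≤ v ⬝ᵥ M *ᵥ v

namespace CoerciveWith

variable {M : Matrix ι ι ℝ} {c K : ℝ}

theorem mul_norm_le_norm_mulVec (hM : CoerciveWith c M) (v : ι → ℝ) :
    c * ‖toLp 2 v‖ ≤ ‖toLp 2 (M *ᵥ v)‖ := by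
  rcases (norm_nonneg (toLp 2 v)).eq_or_lt with hv | hv
  · simp [← hv]
  · refine le_of_mul_le_mul_left ?_ hv
    calc ‖toLp 2 v‖ * (c * ‖toLp 2 v‖) = c * ‖toLp 2 v‖ ^ 2 := by ring
      _ ≤ v ⬝ᵥ M *ᵥ v := hM v
      _ ≤ ‖toLp 2 v‖ * ‖toLp 2 (M *ᵥ v)‖ :=
        (le_abs_self _).trans (abs_dotProduct_le_norm_mul_norm _ _)

theorem le_diag (hM : CoerciveWith c M) (i : ι) : c ≤ M i i := by
  classical simpa using hM (Pi.single i 1)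

variable [DecidableEq ι]

theorem isUnit (hM : CoerciveWith c M) (hc : 0 < c) : IsUnit M := by
  refine mulVec_injective_iff_isUnit.1 fun v w hvw => sub_eq_zero.1 ?_
  have h := hM.mul_norm_le_norm_mulVec (v - w)
  rw [mulVec_sub, sub_eq_zero.2 hvw, WithLp.toLp_zero, norm_zero] at h
  exact (WithLp.toLp_eq_zero 2).1 (norm_le_zero_iff.1 (nonpos_of_mul_nonpos_right h hc))

theorem mulVec_inv_mulVec (hM : CoerciveWith c M) (hc : 0 < c) (v : ι → ℝ) :
    M *ᵥ (M⁻¹ *ᵥ v) = v := by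
  rw [mulVec_mulVec, mul_nonsing_inv M ((isUnit_iff_isUnit_det M).1 (hM.isUnit hc)), one_mulVec]

theorem l2_opNorm_inv_le (hM : CoerciveWith c M) (hc : 0 < c) : ‖M⁻¹‖ ≤ c⁻¹ := by
  refine l2_opNorm_le_of_forall_norm_mulVec_le _ (inv_nonneg.2 hc.le) fun v => ?_
  have h := hM.mul_norm_le_norm_mulVec (M⁻¹ *ᵥ v)
  rwa [hM.mulVec_inv_mulVec hc, ← le_inv_mul_iff₀ hc] at h

theorem inv (hM : CoerciveWith c M) (hc : 0 < c) (hK : 0 < K) (hMK : ‖M‖ ≤ K) :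
    CoerciveWith (c / K ^ 2) M⁻¹ := by
  intro v
  set w := M⁻¹ *ᵥ v
  have hMw : M *ᵥ w = v := hM.mulVec_inv_mulVec hc v
  have hv : ‖toLp 2 v‖ ≤ K * ‖toLp 2 w‖ := by
    rw [← hMw]
    exact (norm_toLp_mulVec_le M w).trans (by gcongr)
  calc c / K ^ 2 * ‖toLp 2 v‖ ^ 2 ≤ c / K ^ 2 * (K * ‖toLp 2 w‖) ^ 2 := by gcongr
    _ = c * ‖toLp 2 w‖ ^ 2 := by field_simp
    _ ≤ w ⬝ᵥ M *ᵥ w := hM w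
    _ = v ⬝ᵥ w := by rw [hMw, dotProduct_comm]

theorem diagonal_diag (hM : CoerciveWith c M) : CoerciveWith c (diagonal M.diag) := by
  intro v
  simp only [EuclideanSpace.real_norm_sq_eq, Finset.mul_sum, dotProduct, mulVec_diagonal]
  refine Finset.sum_le_sum fun i _ => ?_
  calc c * v i ^ 2 ≤ M i i * v i ^ 2 := by gcongr; exact hM.le_diag i
    _ = v i * (M.diag i * v i) := by rw [diag_apply]; ring

end CoerciveWith

end EuclideanMatrix

namespace DirDerivsBoundedOn

variable {κ ι E : Type*} [Fintype ι] [DecidableEq ι] [NormedAddCommGroup E] [NormedSpace ℝ E]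
  {e : κ → E} {U : Set E} {K : ℝ} {m : ℕ}

theorem matrix_of (hU : IsOpen U) {f : ι → ι → E → ℝ} {W : ι → ι → ℝ} (hK : 0 ≤ K)
    (hf : ∀ i j, DirDerivsBoundedOn e U (W i j) m (f i j)) (hrow : ∀ i, ∑ j, W i j ≤ K)
    (hcol : ∀ j, ∑ i, W i j ≤ K) :
    DirDerivsBoundedOn e U K m fun θ => Matrix.of fun i j => f i j θ := by
  have hbound {g : ι → ι → E → ℝ} (hg : ∀ i j, ∀ θ ∈ U, ‖g i j θ‖ ≤ W i j) :
      ∀ θ ∈ U, ‖Matrix.of fun i j => g i j θ‖ ≤ K := fun θ hθ =>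
    l2_opNorm_le_of_sum_abs_le _ hK
      (fun i => (Finset.sum_le_sum fun j _ => hg i j θ hθ).trans (hrow i))
      (fun j => (Finset.sum_le_sum fun i _ => hg i j θ hθ).trans (hcol j))
  induction m generalizing f with
  | zero => exact hbound hf
  | succ m ih =>
    let T : (ι → ι → ℝ) →L[ℝ] Matrix ι ι ℝ :=
      LinearMap.toContinuousLinearMap (ofLinearEquiv ℝ).toLinearMap
    have hderiv : ∀ θ ∈ U, HasFDerivAt (fun θ => Matrix.of fun i j => f i j θ)
        (T.comp (.pi fun i => .pi fun j => fderiv ℝ (f i j) θ)) θ := fun θ hθ =>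
      T.hasFDerivAt.comp θ (hasFDerivAt_pi.2 fun i => hasFDerivAt_pi.2 fun j =>
        ((hf i j).differentiableAt hθ).hasFDerivAt)
    refine ⟨hbound fun i j θ hθ => (hf i j).norm_le hθ,
      fun θ hθ => (hderiv θ hθ).differentiableAt,
      fun k => (ih fun i j => (hf i j).dirDeriv k).congr hU fun θ hθ => ?_⟩
    simp only [(hderiv θ hθ).fderiv]
    rfl

variable {F : E → Matrix ι ι ℝ}

theorem diagonal_diag (hU : IsOpen U) (hF : DirDerivsBoundedOn e U K m F) :
    DirDerivsBoundedOn e U K m fun θ => diagonal (F θ).diag := by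
  simpa only [one_mul] using! hF.linearMap_comp hU
    (diagonalLinearMap ι ℝ ℝ ∘ₗ diagLinearMap ι ℝ ℝ) zero_le_one
    fun M => (l2_opNorm_diagonal_diag_le M).trans_eq (one_mul _).symm

theorem matrix_inv (hU : IsOpen U) (hF : DirDerivsBoundedOn e U K m F) {c : ℝ} (hc : 0 < c)
    (hcoercive : ∀ θ ∈ U, CoerciveWith c (F θ)) :
    DirDerivsBoundedOn e U (inverseDerivBound K c⁻¹ m) m fun θ => (F θ)⁻¹ := by
  have : CompleteSpace (Matrix ι ι ℝ) := FiniteDimensional.complete ℝ _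
  simp only [nonsing_inv_eq_ringInverse]
  refine hF.ringInverse hU (fun θ hθ => (hcoercive θ hθ).isUnit hc) fun θ hθ => ?_
  rw [← nonsing_inv_eq_ringInverse]
  exact (hcoercive θ hθ).l2_opNorm_inv_le hc

theorem dotProduct_mulVec (hU : IsOpen U) (hF : DirDerivsBoundedOn e U K m F) (v : ι → ℝ) :
    DirDerivsBoundedOn e U (‖toLp 2 v‖ ^ 2 * K) m fun θ => v ⬝ᵥ F θ *ᵥ v :=
  hF.linearMap_comp hU (dotProductBilin ℝ ℝ v ∘ₗ (mulVecBilin ℝ ℝ).flip v) (sq_nonneg _)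
    fun M => (abs_dotProduct_mulVec_le M v).trans_eq (mul_comm _ _)

end DirDerivsBoundedOn

section Packing

theorem one_add_rpow_le {t s : ℝ} (ht : 0 ≤ t) (hs : 0 ≤ s) :
    (1 + t) ^ s ≤ 2 ^ s * (1 + t ^ s) := by
  have hts : 0 ≤ t ^ s := Real.rpow_nonneg ht s
  calc (1 + t) ^ s ≤ (2 * max 1 t) ^ s := by
        gcongr
        linarith [le_max_left 1 t, le_max_right 1 t]
    _ = 2 ^ s * max 1 t ^ s := Real.mul_rpow zero_le_two (by positivity)
    _ ≤ 2 ^ s * (1 + t ^ s) := by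
      gcongr
      rcases max_cases 1 t with ⟨h, -⟩ | ⟨h, -⟩ <;> rw [h]
      · rw [Real.one_rpow]; linarith
      · linarith

variable {E ι : Type*} [NormedAddCommGroup E] [NormedSpace ℝ E] [FiniteDimensional ℝ E]
  [MeasurableSpace E] [BorelSpace E] [Fintype ι] {x : ι → E} {δ : ℝ}

theorem sum_mul_measureReal_ball_le_integral (μ : Measure E) [μ.IsAddHaarMeasure]
    (hx : Pairwise fun i j => δ ≤ ‖x i - x j‖) {w : ι → ℝ} {g : E → ℝ} (hg : Integrable g μ)
    (hg₀ : ∀ z, 0 ≤ g z) (hwg : ∀ i, ∀ z ∈ Metric.ball (x i) (δ / 2), w i ≤ g z) :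
    (∑ i, w i) * μ.real (Metric.ball 0 (δ / 2)) ≤ ∫ z, g z ∂μ := by
  have hdisj : Pairwise (Function.onFun Disjoint fun i => Metric.ball (x i) (δ / 2)) :=
    fun i j hij => Metric.ball_disjoint_ball <| by
      rw [dist_eq_norm, add_halves]
      exact hx hij
  calc (∑ i, w i) * μ.real (Metric.ball 0 (δ / 2))
      = ∑ i, w i * μ.real (Metric.ball (x i) (δ / 2)) := by
        simp only [Finset.sum_mul, Measure.addHaar_real_ball_center]
    _ ≤ ∑ i, ∫ z in Metric.ball (x i) (δ / 2), g z ∂μ := Finset.sum_le_sum fun i _ =>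
        setIntegral_ge_of_const_le_real measurableSet_ball measure_ball_lt_top.ne (hwg i)
          hg.integrableOn
    _ = ∫ z in ⋃ i, Metric.ball (x i) (δ / 2), g z ∂μ :=
        (integral_iUnion_fintype (fun _ => measurableSet_ball) hdisj
          fun _ => hg.integrableOn).symm
    _ ≤ ∫ z, g z ∂μ := setIntegral_le_integral hg (.of_forall hg₀)

theorem sum_one_add_norm_rpow_neg_le (μ : Measure E) [μ.IsAddHaarMeasure] (hδ : 0 < δ)
    (hx : Pairwise fun i j => δ ≤ ‖x i - x j‖) {s : ℝ} (hs : Module.finrank ℝ E < s) (a : E) :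
    ∑ i, (1 + ‖a - x i‖) ^ (-s) ≤
      (1 + δ / 2) ^ s * (∫ z, (1 + ‖z‖) ^ (-s) ∂μ) / μ.real (Metric.ball 0 (δ / 2)) := by
  have hs₀ : 0 ≤ s := (Nat.cast_nonneg _).trans hs.le
  have hball : 0 < μ.real (Metric.ball 0 (δ / 2)) :=
    ENNReal.toReal_pos (Metric.measure_ball_pos μ _ (half_pos hδ)).ne' measure_ball_lt_top.ne
  have hint : Integrable (fun z => (1 + ‖a - z‖) ^ (-s)) μ :=
    (integrable_one_add_norm hs).comp_sub_left a
  rw [le_div_iff₀ hball, ← integral_sub_left_eq_self (fun z => (1 + ‖z‖) ^ (-s)) μ a,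
    ← integral_const_mul]
  refine sum_mul_measureReal_ball_le_integral μ hx (hint.const_mul _)
    (fun z => by positivity) fun i z hz => ?_
  have hnorm : 1 + ‖a - z‖ ≤ (1 + δ / 2) * (1 + ‖a - x i‖) := by
    have htri := norm_sub_le_norm_sub_add_norm_sub a (x i) z
    rw [Metric.mem_ball', dist_eq_norm] at hz
    nlinarith [norm_nonneg (a - x i)]
  have hrpow : (1 + ‖a - z‖) ^ s ≤ (1 + δ / 2) ^ s * (1 + ‖a - x i‖) ^ s := by
    rw [← Real.mul_rpow (by positivity) (by positivity)]
    exact Real.rpow_le_rpow (by positivity) hnorm hs₀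
  rw [Real.rpow_neg (by positivity), Real.rpow_neg (by positivity), ← div_eq_mul_inv,
    le_div_iff₀ (by positivity), inv_mul_le_iff₀ (by positivity), mul_comm]
  exact hrpow

theorem exists_forall_sum_one_div_one_add_norm_rpow_le {d : ℕ} {x : ℕ → Euc d} (hδ : 0 < δ)
    (hx : Pairwise fun i j => δ ≤ ‖x i - x j‖) {s : ℝ} (hs : d < s) :
    ∃ K, ∀ (n : ℕ) (a : Euc d), ∑ j : Fin n, 1 / (1 + ‖a - x j‖ ^ s) ≤ K := by
  set B := (1 + δ / 2) ^ s * (∫ z : Euc d, (1 + ‖z‖) ^ (-s)) /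
    volume.real (Metric.ball (0 : Euc d) (δ / 2))
  have hs₀ : 0 ≤ s := (Nat.cast_nonneg d).trans hs.le
  refine ⟨2 ^ s * B, fun n a => ?_⟩
  have hterm (j : Fin n) : 1 / (1 + ‖a - x j‖ ^ s) ≤ 2 ^ s * (1 + ‖a - x j‖) ^ (-s) := by
    rw [Real.rpow_neg (by positivity), ← div_eq_mul_inv,
      div_le_div_iff₀ (by positivity) (by positivity), one_mul]
    exact one_add_rpow_le (norm_nonneg _) hs₀
  calc ∑ j : Fin n, 1 / (1 + ‖a - x j‖ ^ s)
      ≤ 2 ^ s * ∑ j : Fin n, (1 + ‖a - x j‖) ^ (-s) := by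
        rw [Finset.mul_sum]
        exact Finset.sum_le_sum fun j _ => hterm j
    _ ≤ 2 ^ s * B := by
        gcongr
        exact sum_one_add_norm_rpow_neg_le volume hδ (hx.comp_of_injective Fin.val_injective)
          (by simpa using hs) a

end Packing

section CrossValidationMatrix

variable {κ E : Type*} [NormedAddCommGroup E] [NormedSpace ℝ E] {e : κ → E} {U : Set E} {K c : ℝ}

/-- The matrix of the quadratic form in the cross-validation criterion of a correlation
matrix `R`. -/
def cvMatrix {ι : Type*} [Fintype ι] [DecidableEq ι] (R : Matrix ι ι ℝ) : Matrix ι ι ℝ :=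
  R⁻¹ * (diagonal R⁻¹.diag)⁻¹ ^ 2 * R⁻¹

theorem exists_forall_dirDerivsBoundedOn_cvMatrix (hU : IsOpen U) (hc : 0 < c) (m : ℕ) :
    ∃ C, ∀ {ι : Type*} [Fintype ι] [DecidableEq ι] {F : E → Matrix ι ι ℝ},
      DirDerivsBoundedOn e U K m F → (∀ θ ∈ U, CoerciveWith c (F θ)) →
      DirDerivsBoundedOn e U C m fun θ => cvMatrix (F θ) := by
  let I := inverseDerivBound K c⁻¹ m
  let J := inverseDerivBound I (c / (|K| + 1) ^ 2)⁻¹ m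
  refine ⟨2 ^ m * (2 ^ m * (I * (2 ^ m * (J * J))) * I), fun {ι} _ _ F hF hcoercive => ?_⟩
  have hcoerciveDiag : ∀ θ ∈ U, CoerciveWith (c / (|K| + 1) ^ 2) (diagonal (F θ)⁻¹.diag) :=
    fun θ hθ => ((hcoercive θ hθ).inv hc (by positivity)
      ((hF.norm_le hθ).trans ((le_abs_self K).trans (lt_add_one _).le))).diagonal_diag
  have hinv := hF.matrix_inv hU hc hcoercive
  have hdiagInv := (hinv.diagonal_diag hU).matrix_inv hU (by positivity) hcoerciveDiag
  simp only [cvMatrix, sq (_ : Matrix ι ι ℝ)]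
  exact (hinv.mul hU (hdiagInv.mul hU hdiagInv)).mul hU hinv

end CrossValidationMatrix

section PartialDerivatives

variable {p : ℕ} {U : Set (Euc p)} {K : ℝ} {m : ℕ} {f : Euc p → ℝ}

/-- All iterated partial derivatives of `f` of order at most `m` exist on `U` and are bounded there
in norm by `K`; for real-valued `f` they are the iterates of `pder`. -/
abbrev PartialsBoundedOn {A : Type*} [NormedAddCommGroup A] [NormedSpace ℝ A] (U : Set (Euc p))
    (K : ℝ) (m : ℕ) (f : Euc p → A) : Prop :=
  DirDerivsBoundedOn (fun j : Fin p => EuclideanSpace.single j (1 : ℝ)) U K m f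

theorem contDiffAt_pder {θ : Euc p} {n : WithTop ℕ∞} (hf : ContDiffAt ℝ (n + 1) f θ) (j : Fin p) :
    ContDiffAt ℝ n (pder j f) θ :=
  (hf.fderiv_right le_rfl).clm_apply contDiffAt_const

theorem partialsBoundedOn_three (hf : ∀ θ ∈ U, ContDiffAt ℝ 3 f θ) (h₀ : ∀ θ ∈ U, |f θ| ≤ K)
    (h₁ : ∀ θ ∈ U, ∀ j, |pder j f θ| ≤ K) (h₂ : ∀ θ ∈ U, ∀ j k, |pder k (pder j f) θ| ≤ K)
    (h₃ : ∀ θ ∈ U, ∀ j k l, |pder l (pder k (pder j f)) θ| ≤ K) : PartialsBoundedOn U K 3 f := by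
  have hf₁ : ∀ j, ∀ θ ∈ U, ContDiffAt ℝ 2 (pder j f) θ := fun j θ hθ =>
    contDiffAt_pder (n := 2) (hf θ hθ) j
  have hf₂ : ∀ j k, ∀ θ ∈ U, ContDiffAt ℝ 1 (pder k (pder j f)) θ := fun j k θ hθ =>
    contDiffAt_pder (n := 1) (hf₁ j θ hθ) k
  exact ⟨h₀, fun θ hθ => (hf θ hθ).differentiableAt (by norm_num), fun j =>
    ⟨fun θ hθ => h₁ θ hθ j, fun θ hθ => (hf₁ j θ hθ).differentiableAt (by norm_num), fun k =>
      ⟨fun θ hθ => h₂ θ hθ j k, fun θ hθ => (hf₂ j k θ hθ).differentiableAt (by norm_num), fun l =>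
        fun θ hθ => h₃ θ hθ j k l⟩⟩⟩

theorem opBound_of_norm_le {n : ℕ} {A : Matrix (Fin n) (Fin n) ℝ} {C : ℝ} (hA : ‖A‖ ≤ C) :
    opBound A C := by
  intro v
  have h : ‖toLp 2 (A *ᵥ v)‖ ≤ C * ‖toLp 2 v‖ :=
    (norm_toLp_mulVec_le A v).trans (by gcongr)
  simpa [EuclideanSpace.norm_eq] using h

namespace PartialsBoundedOn

theorem sqrt_sum_pder_sq_le (hf : PartialsBoundedOn U K (m + 1) f) {θ : Euc p} (hθ : θ ∈ U) :
    √(∑ j, pder j f θ ^ 2) ≤ p * K := by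
  have hK : 0 ≤ K := hf.nonneg hθ
  refine Real.sqrt_le_iff.2 ⟨by positivity, ?_⟩
  calc ∑ j, pder j f θ ^ 2 = ∑ j, |pder j f θ| ^ 2 := by simp only [sq_abs]
    _ ≤ (∑ j, |pder j f θ|) ^ 2 := Finset.sum_sq_le_sq_sum_of_nonneg fun j _ => abs_nonneg _
    _ ≤ (∑ _j : Fin p, K) ^ 2 := by gcongr with j; exact (hf.dirDeriv j).norm_le hθ
    _ = (p * K) ^ 2 := by simp

theorem l2_opNorm_hessian_le (hf : PartialsBoundedOn U K (m + 2) f) {θ : Euc p} (hθ : θ ∈ U) :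
    ‖Matrix.of fun j k => pder k (pder j f) θ‖ ≤ p * K := by
  have hK : 0 ≤ K := hf.nonneg hθ
  have hentry (j k : Fin p) : |pder k (pder j f) θ| ≤ K := ((hf.dirDeriv j).dirDeriv k).norm_le hθ
  refine l2_opNorm_le_of_sum_abs_le _ (by positivity) (fun j => ?_) fun k => ?_
  · exact (Finset.sum_le_sum fun k _ => hentry j k).trans_eq (by simp)
  · exact (Finset.sum_le_sum fun j _ => hentry j k).trans_eq (by simp)

theorem abs_pder_three_le (hf : PartialsBoundedOn U K (m + 3) f) {θ : Euc p} (hθ : θ ∈ U)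
    (j k l : Fin p) : |pder l (pder k (pder j f)) θ| ≤ K :=
  (((hf.dirDeriv j).dirDeriv k).dirDeriv l).norm_le hθ

end PartialsBoundedOn

end PartialDerivatives

section CrossValidation

variable {d p : ℕ} {U : Set (Euc p)} {x : ℕ → Euc d} {kern : Euc p → Euc d → ℝ} {δ c B s : ℝ}
  {m : ℕ}

theorem exists_forall_partialsBoundedOn_Rmat (hU : IsOpen U) (hδ : 0 < δ)
    (hx : Pairwise fun i j => δ ≤ ‖x i - x j‖) (hB : 0 ≤ B) (hs : d < s)
    (hkern : ∀ z, PartialsBoundedOn U (B / (1 + ‖z‖ ^ s)) m fun θ => kern θ z) :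
    ∃ K, ∀ n, PartialsBoundedOn U K m (Rmat x kern n) := by
  obtain ⟨K, hK⟩ := exists_forall_sum_one_div_one_add_norm_rpow_le hδ hx hs
  have hrow (n : ℕ) (a : Euc d) : ∑ j : Fin n, B / (1 + ‖a - x j‖ ^ s) ≤ B * K := by
    simpa only [Finset.mul_sum, mul_one_div] using mul_le_mul_of_nonneg_left (hK n a) hB
  refine ⟨B * K, fun n => DirDerivsBoundedOn.matrix_of hU (by simpa using hrow 0 0)
    (fun i j => hkern (x i - x j)) (fun i => hrow n (x i)) fun j => ?_⟩
  simpa only [norm_sub_rev] using hrow n (x j)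

theorem exists_forall_partialsBoundedOn_CVcrit (hU : IsOpen U) (hδ : 0 < δ)
    (hx : Pairwise fun i j => δ ≤ ‖x i - x j‖) (hc : 0 < c)
    (hcoercive : ∀ n, ∀ θ ∈ U, CoerciveWith c (Rmat x kern n θ)) (hB : 0 ≤ B) (hs : d < s)
    (hkern : ∀ z, PartialsBoundedOn U (B / (1 + ‖z‖ ^ s)) m fun θ => kern θ z) :
    ∃ C, ∀ n (y : Fin n → ℝ),
      PartialsBoundedOn U (C * ((1 / n) * ∑ i, y i ^ 2)) m (CVcrit x kern n y) := by
  obtain ⟨K, hK⟩ := exists_forall_partialsBoundedOn_Rmat hU hδ hx hB hs hkern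
  obtain ⟨C, hC⟩ := exists_forall_dirDerivsBoundedOn_cvMatrix hU hc m
  refine ⟨C, fun n y => ?_⟩
  have hquad := (hC (hK n) (hcoercive n)).dotProduct_mulVec hU y
  have hscaled : PartialsBoundedOn U (1 / n * (‖toLp 2 y‖ ^ 2 * C)) m (CVcrit x kern n y) :=
    hquad.linearMap_comp hU (LinearMap.mulLeft ℝ (1 / n : ℝ)) (by positivity)
      fun a => (norm_mul_le _ a).trans_eq (by rw [Real.norm_of_nonneg (by positivity)])
  refine hscaled.mono (le_of_eq ?_)
  rw [EuclideanSpace.real_norm_sq_eq]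
  ring

end CrossValidation

theorem CV_derivative_bounds_general {d p : ℕ} {U : Set (Euc p)} (hU : IsOpen U)
    {x : ℕ → Euc d} {kern : Euc p → Euc d → ℝ}
    {δ : ℝ} (hδ : 0 < δ) (hx : Pairwise fun i j => δ ≤ ‖x i - x j‖)
    {c : ℝ} (hc : 0 < c)
    (hcoercive : ∀ n, ∀ θ ∈ U, ∀ v : Fin n → ℝ, c * ∑ i, v i ^ 2 ≤ v ⬝ᵥ Rmat x kern n θ *ᵥ v)
    (hsmooth : ∀ z, ∀ θ ∈ U, ContDiffAt ℝ 3 (fun θ' => kern θ' z) θ)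
    {B s : ℝ} (hB : 0 ≤ B) (hs : d < s)
    (hdecay : ∀ θ ∈ U, ∀ z, |kern θ z| ≤ B / (1 + ‖z‖ ^ s))
    (hdecay₁ : ∀ θ ∈ U, ∀ z j, |pder j (fun θ' => kern θ' z) θ| ≤ B / (1 + ‖z‖ ^ s))
    (hdecay₂ : ∀ θ ∈ U, ∀ z j k,
      |pder k (pder j fun θ' => kern θ' z) θ| ≤ B / (1 + ‖z‖ ^ s))
    (hdecay₃ : ∀ θ ∈ U, ∀ z j k l,
      |pder l (pder k (pder j fun θ' => kern θ' z)) θ| ≤ B / (1 + ‖z‖ ^ s)) :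
    ∃ C : ℝ, ∀ (n : ℕ) (y : Fin n → ℝ), ∀ θ ∈ U,
      √(∑ j, pder j (CVcrit x kern n y) θ ^ 2) ≤ C * ((1 / n) * ∑ i, y i ^ 2) ∧
      opBound (Matrix.of fun j k : Fin p => pder k (pder j (CVcrit x kern n y)) θ)
        (C * ((1 / n) * ∑ i, y i ^ 2)) ∧
      ∀ j k l : Fin p,
        |pder l (pder k (pder j (CVcrit x kern n y))) θ| ≤ C * ((1 / n) * ∑ i, y i ^ 2) := by
  obtain ⟨C, hC⟩ := exists_forall_partialsBoundedOn_CVcrit (m := 3) hU hδ hx hc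
    (fun n θ hθ v => by simpa only [EuclideanSpace.real_norm_sq_eq] using hcoercive n θ hθ v) hB hs
    fun z => partialsBoundedOn_three (hsmooth z) (fun θ hθ => hdecay θ hθ z)
      (fun θ hθ => hdecay₁ θ hθ z) (fun θ hθ => hdecay₂ θ hθ z) fun θ hθ => hdecay₃ θ hθ z
  refine ⟨(p + 1) * C, fun n y θ hθ => ?_⟩
  have hM := hC n y
  have hK := hM.nonneg hθ
  rw [mul_assoc]
  have hpK := mul_le_mul_of_nonneg_right (le_add_of_nonneg_right (a := (p : ℝ)) zero_le_one) hK
  exact ⟨(hM.sqrt_sum_pder_sq_le hθ).trans hpK,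
    opBound_of_norm_le ((hM.l2_opNorm_hessian_le hθ).trans hpK),
    fun j k l => (hM.abs_pder_three_le hθ j k l).trans
      (le_mul_of_one_le_left hK (le_add_of_nonneg_left p.cast_nonneg))⟩

/-- Lemma C.5: derivatives of the cross-validation criterion of orders 1, 2, 3
are uniformly bounded by `C ‖y‖²/n`. -/
theorem CV_derivative_bounds
    {d p : ℕ} (Θ : Set (Euc p)) (hΘcompact : IsCompact Θ)
    (x : ℕ → Euc d) (kern : Euc p → Euc d → ℝ)
    -- Condition 10 (minimal distance between observation points)
    (cx : ℝ) (hcx : 0 < cx) (hmindist : ∀ i j : ℕ, i ≠ j → cx ≤ ‖x i - x j‖)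
    -- Condition 11 (uniformly positive definite correlation matrices)
    (cR1 : ℝ) (hcR1 : 0 < cR1)
    (heigR : ∀ (n : ℕ), ∀ θ ∈ Θ, ∀ v : Fin n → ℝ,
      cR1 * (∑ i, v i ^ 2) ≤ v ⬝ᵥ (Rmat x kern n θ).mulVec v)
    -- Condition 12 (third-order smoothness in θ and decay of the correlation)
    (hsmooth : ∀ z : Euc d, ∀ θ ∈ interior Θ, ContDiffAt ℝ 3 (fun θ' => kern θ' z) θ)
    (CR2 cR2 : ℝ) (hCR2 : 0 < CR2) (hcR2 : 0 < cR2)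
    (hdecay : ∀ θ ∈ Θ, ∀ z : Euc d,
      |kern θ z| ≤ CR2 / (1 + ‖z‖ ^ ((d : ℝ) + cR2)))
    (hdecay1 : ∀ θ ∈ interior Θ, ∀ (z : Euc d) (j : Fin p),
      |pder j (fun θ' => kern θ' z) θ| ≤ CR2 / (1 + ‖z‖ ^ ((d : ℝ) + cR2)))
    (hdecay2 : ∀ θ ∈ interior Θ, ∀ (z : Euc d) (j k : Fin p),
      |pder k (pder j fun θ' => kern θ' z) θ| ≤ CR2 / (1 + ‖z‖ ^ ((d : ℝ) + cR2)))
    (hdecay3 : ∀ θ ∈ interior Θ, ∀ (z : Euc d) (j k l : Fin p),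
      |pder l (pder k (pder j fun θ' => kern θ' z)) θ|
        ≤ CR2 / (1 + ‖z‖ ^ ((d : ℝ) + cR2)))
    : ∃ C : ℝ, ∀ (n : ℕ) (y : Fin n → ℝ), ∀ θ ∈ interior Θ,
      (Real.sqrt (∑ j, pder j (CVcrit x kern n y) θ ^ 2)
          ≤ C * ((1 / n) * ∑ i, y i ^ 2)) ∧
      opBound (Matrix.of fun j k : Fin p => pder k (pder j (CVcrit x kern n y)) θ)
        (C * ((1 / n) * ∑ i, y i ^ 2)) ∧
      ∀ j k l : Fin p,
        |pder l (pder k (pder j (CVcrit x kern n y))) θ|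
          ≤ C * ((1 / n) * ∑ i, y i ^ 2) :=
  CV_derivative_bounds_general isOpen_interior hcx hmindist hcR1
    (fun n θ hθ => heigR n θ (interior_subset hθ)) hsmooth hCR2.le (lt_add_of_pos_right _ hcR2)
    (fun θ hθ => hdecay θ (interior_subset hθ)) hdecay1 hdecay2 hdecay3
end
end
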